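/- The partial derivatives ∂w/∂y₁ and ∂w/∂y₂ of w (where w(y) = (1−|y|²)/4 for |y| ≤ 1 and w(y) = (1/2)ln(1/|y|) for |y| > 1) are bounded continuous functions on ℝ² and satisfy in the distributional sense ∫_{ℝ²} ∇(∂w/∂y_i)·∇φ = 2 ∫_{|y|=1} (∂w/∂y_i) φ dσ for all φ ∈ C_c^∞(ℝ²). -/

import Mathlib

open Real Metric MeasureTheory

noncomputable abbrev E2 := EuclideanSpace ℝ (Fin 2)

/-- The Laplacian in two variables. -/
noncomputable def lap (f : E2 → ℝ) (x : E2) : ℝ :=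
  ∑ i : Fin 2,
    fderiv ℝ (fun z => fderiv ℝ f z (EuclideanSpace.single i 1)) x (EuclideanSpace.single i 1)

/-- `∂w/∂y_i` for the radial profile `w`: `−y_i/2` for `|y| ≤ 1` and `−y_i/(2|y|²)` else. -/
noncomputable def dw (i : Fin 2) (y : E2) : ℝ :=
  if ‖y‖ ≤ 1 then -(y i) / 2 else -(y i) / (2 * ‖y‖ ^ 2)


lemma swap_cont {H : ℝ → ℝ → ℝ} {a b c d : ℝ} (hab : a ≤ b) (hcd : c ≤ d)
    (hH : ContinuousOn (Function.uncurry H) (Set.Icc a b ×ˢ Set.Icc c d)) :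
    ∫ r in a..b, ∫ t in c..d, H r t = ∫ t in c..d, ∫ r in a..b, H r t := by
  apply MeasureTheory.intervalIntegral_intervalIntegral_swap
  rw [Set.uIoc_of_le hab, Set.uIoc_of_le hcd]
  exact (hH.integrableOn_compact (isCompact_Icc.prod isCompact_Icc)).mono_set
    (Set.prod_mono Set.Ioc_subset_Icc_self Set.Ioc_subset_Icc_self)

/-- The generic Green-type identity in a polar rectangle. -/
lemma green {a b : ℝ} (hab : a ≤ b) {H A B A' B' : ℝ → ℝ → ℝ}
    (hA' : ContinuousOn (Function.uncurry A') (Set.Icc a b ×ˢ Set.Icc (-π) π))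
    (hB' : ContinuousOn (Function.uncurry B') (Set.Icc a b ×ˢ Set.Icc (-π) π))
    (hA : ∀ r ∈ Set.Icc a b, ∀ t, HasDerivAt (fun r => A r t) (A' r t) r)
    (hB : ∀ r ∈ Set.Icc a b, ∀ t, HasDerivAt (fun t => B r t) (B' r t) t)
    (hper : ∀ r ∈ Set.Icc a b, B r π = B r (-π))
    (hH : ∀ r ∈ Set.Icc a b, ∀ t, H r t = A' r t + B' r t) :
    ∫ r in a..b, ∫ t in (-π)..π, H r t = ∫ t in (-π)..π, (A b t - A a t) := by
  have hpi : -π ≤ π := by linarith [pi_pos]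
  have h1 : ∫ r in a..b, ∫ t in (-π)..π, H r t = ∫ r in a..b, ∫ t in (-π)..π, A' r t := by
    apply intervalIntegral.integral_congr
    intro r hr
    rw [Set.uIcc_of_le hab] at hr
    have cA : ContinuousOn (A' r) (Set.uIcc (-π) π) := by
      rw [Set.uIcc_of_le hpi]
      exact hA'.comp (f := fun t => (r, t)) (by fun_prop) (fun t ht => ⟨hr, ht⟩)
    have cB : ContinuousOn (B' r) (Set.uIcc (-π) π) := by
      rw [Set.uIcc_of_le hpi]
      exact hB'.comp (f := fun t => (r, t)) (by fun_prop) (fun t ht => ⟨hr, ht⟩)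
    have : ∫ t in (-π)..π, B' r t = 0 := by
      rw [intervalIntegral.integral_eq_sub_of_hasDerivAt (fun t _ => hB r hr t)
        cB.intervalIntegrable, hper r hr, sub_self]
    simp only [hH r hr]
    rw [intervalIntegral.integral_add cA.intervalIntegrable cB.intervalIntegrable, this, add_zero]
  rw [h1, swap_cont hab hpi hA']
  apply intervalIntegral.integral_congr
  intro t ht
  rw [Set.uIcc_of_le hpi] at ht
  apply intervalIntegral.integral_eq_sub_of_hasDerivAt
  · intro r hr
    rw [Set.uIcc_of_le hab] at hr
    exact hA r hr t
  · apply ContinuousOn.intervalIntegrable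
    rw [Set.uIcc_of_le hab]
    exact hA'.comp (f := fun r => (r, t)) (by fun_prop) (fun r hr => ⟨hr, ht⟩)

lemma core {R : ℝ} (hR : 1 ≤ R) {F Fr Ft Frr Ftt L : ℝ → ℝ → ℝ} {c c' g : ℝ → ℝ}
    (hF : Continuous (Function.uncurry F)) (hFr : Continuous (Function.uncurry Fr))
    (hFrr : Continuous (Function.uncurry Frr)) (hFtt : Continuous (Function.uncurry Ftt))
    (hc : ∀ t, HasDerivAt c (c' t) t) (hc' : ∀ t, HasDerivAt c' (-c t) t)
    (hcper : c π = c (-π)) (hcper' : c' π = c' (-π))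
    (hFper : ∀ r, F r π = F r (-π)) (hFtper : ∀ r, Ft r π = Ft r (-π))
    (dr : ∀ r t, HasDerivAt (fun r => F r t) (Fr r t) r)
    (drr : ∀ r t, HasDerivAt (fun r => Fr r t) (Frr r t) r)
    (dt : ∀ r t, HasDerivAt (fun t => F r t) (Ft r t) t)
    (dtt : ∀ r t, HasDerivAt (fun t => Ft r t) (Ftt r t) t)
    (hL : ∀ r t, r ^ 2 * L r t = r ^ 2 * Frr r t + r * Fr r t + Ftt r t)
    (hFR : ∀ t, F R t = 0) (hFrR : ∀ t, Fr R t = 0)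
    (hg1 : ∀ r ∈ Set.Icc (0 : ℝ) 1, g r = - r / 2)
    (hg2 : ∀ r ∈ Set.Icc 1 R, g r = - 1 / (2 * r)) :
    (∫ r in (0 : ℝ)..1, ∫ t in (-π)..π, r * (g r * c t * L r t)) +
    (∫ r in (1 : ℝ)..R, ∫ t in (-π)..π, r * (g r * c t * L r t)) = ∫ t in (-π)..π, c t * F 1 t := by
  have cc : Continuous c := continuous_iff_continuousAt.2 fun t => (hc t).continuousAt
  have hcF : Continuous fun p : ℝ × ℝ => F p.1 p.2 := hF
  have hcFr : Continuous fun p : ℝ × ℝ => Fr p.1 p.2 := hFr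
  have hcFrr : Continuous fun p : ℝ × ℝ => Frr p.1 p.2 := hFrr
  have hcFtt : Continuous fun p : ℝ × ℝ => Ftt p.1 p.2 := hFtt
  rw [green (a := 0) (b := 1) (H := fun r t => r * (g r * c t * L r t)) (A := fun r t => -(c t / 2) * (r ^ 2 * Fr r t - r * F r t))
    (A' := fun r t => -(c t / 2) * (r ^ 2 * Frr r t + r * Fr r t - F r t))
    (B := fun r t => -(1 / 2) * (c t * Ft r t - c' t * F r t))
    (B' := fun r t => -(1 / 2) * (c t * Ftt r t + c t * F r t)),
    green (a := 1) (b := R) (H := fun r t => r * (g r * c t * L r t)) (A := fun r t => -(c t / 2) * (Fr r t + r⁻¹ * F r t))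
    (A' := fun r t => -(c t / 2) * (Frr r t + r⁻¹ * Fr r t - (r ^ 2)⁻¹ * F r t))
    (B := fun r t => -(1 / 2) * (r ^ 2)⁻¹ * (c t * Ft r t - c' t * F r t))
    (B' := fun r t => -(1 / 2) * (r ^ 2)⁻¹ * (c t * Ftt r t + c t * F r t))]
  · have c1 : Continuous fun t => F 1 t := hF.comp (f := fun t => ((1:ℝ), t)) (by fun_prop)
    have c2 : Continuous fun t => Fr 1 t := hFr.comp (f := fun t => ((1:ℝ), t)) (by fun_prop)
    simp only [hFR, hFrR]
    rw [← intervalIntegral.integral_add]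
    · congr 1
      ext t
      ring
    · apply Continuous.intervalIntegrable
      fun_prop
    · apply Continuous.intervalIntegrable
      fun_prop
  · exact hR
  · apply ContinuousOn.mono (s := {p : ℝ × ℝ | p.1 ≠ 0})
    · simp only [Function.uncurry_def]
      fun_prop (disch := simp)
    · rintro ⟨r, t⟩ ⟨h, -⟩
      simp at h ⊢
      linarith
  · apply ContinuousOn.mono (s := {p : ℝ × ℝ | p.1 ≠ 0})
    · simp only [Function.uncurry_def]
      fun_prop (disch := simp)
    · rintro ⟨r, t⟩ ⟨h, -⟩
      simp at h ⊢
      linarith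
  · intro r hr t
    have hr0 : r ≠ 0 := by linarith [hr.1]
    convert! ((drr r t).add ((hasDerivAt_inv hr0).mul (dr r t))).const_mul (-(c t / 2)) using 1
    ring
  · intro r hr t
    convert! (((hc t).mul (dtt r t)).sub ((hc' t).mul (dt r t))).const_mul (-(1 / 2) * (r ^ 2)⁻¹) using 1
    ring
  · intro r hr
    simp only [hcper, hcper', hFper, hFtper]
  · intro r hr t
    have hr0 : r ≠ 0 := by linarith [hr.1]
    have := hL r t
    have hL' : L r t = Frr r t + r⁻¹ * Fr r t + (r ^ 2)⁻¹ * Ftt r t := by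
      field_simp
      linarith
    rw [hL', hg2 r hr]
    field_simp
    ring
  · norm_num
  · apply Continuous.continuousOn
    simp only [Function.uncurry_def]
    fun_prop
  · apply Continuous.continuousOn
    simp only [Function.uncurry_def]
    fun_prop
  · intro r hr t
    convert! ((((hasDerivAt_id r).pow 2).mul (drr r t)).sub ((hasDerivAt_id r).mul (dr r t))).const_mul (-(c t / 2)) using 1
    simp only [id, Nat.cast_ofNat, Pi.pow_apply]
    norm_num
    left
    ring
  · intro r hr t
    convert! (((hc t).mul (dtt r t)).sub ((hc' t).mul (dt r t))).const_mul (-(1 / 2)) using 1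
    ring
  · intro r hr
    simp only [hcper, hcper', hFper, hFtper]
  · intro r hr t
    rw [hg1 r hr]
    linear_combination (- c t / 2) * hL r t

/-- Polar parametrization. -/
noncomputable def pol (r t : ℝ) : E2 := !₂[r * cos t, r * sin t]

lemma pol_zero (r t : ℝ) : pol r t 0 = r * cos t := by simp [pol]
lemma pol_one (r t : ℝ) : pol r t 1 = r * sin t := by simp [pol]

lemma pol_cont : Continuous fun p : ℝ × ℝ => pol p.1 p.2 := by
  unfold pol
  apply (PiLp.continuous_toLp 2 _).comp
  apply continuous_pi
  intro i
  fin_cases i <;> simp <;> fun_prop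

lemma norm_pol {r : ℝ} (hr : 0 ≤ r) (t : ℝ) : ‖pol r t‖ = r := by
  rw [EuclideanSpace.norm_eq, Fin.sum_univ_two, pol_zero, pol_one]
  simp only [norm_eq_abs, sq_abs]
  rw [show (r * cos t) ^ 2 + (r * sin t) ^ 2 = r ^ 2 by
    linear_combination r ^ 2 * (sin_sq_add_cos_sq t), sqrt_sq hr]

lemma dist_pol (a b : ℝ) : dist (pol 1 a) (pol 1 b) = 2 * |sin ((a - b) / 2)| := by
  rw [EuclideanSpace.dist_eq, Fin.sum_univ_two, pol_zero, pol_one, pol_zero, pol_one,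
    sqrt_eq_iff_mul_self_eq (by positivity) (by positivity)]
  simp only [Real.dist_eq, sq_abs, one_mul]
  rw [show 2 * |sin ((a - b) / 2)| * (2 * |sin ((a - b) / 2)|) = 4 * |sin ((a - b) / 2)| ^ 2 by ring,
    sq_abs, sin_sq_eq_half_sub, show 2 * ((a - b) / 2) = a - b by ring, cos_sub]
  linear_combination -(-(sin_sq_add_cos_sq a) - (sin_sq_add_cos_sq b))

lemma pol_lip : LipschitzWith 1 (pol 1) := by
  apply LipschitzWith.of_dist_le_mul
  intro a b
  rw [dist_pol, Real.dist_eq]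
  have : |sin ((a - b) / 2)| ≤ |(a - b) / 2| := abs_sin_le_abs
  rw [abs_div, abs_two] at this
  simp
  linarith

lemma pol_inj : Set.InjOn (pol 1) (Set.Ioc (-π) π) := by
  intro a ha b hb h
  have h2 : dist (pol 1 a) (pol 1 b) = 0 := by rw [h, dist_self]
  rw [dist_pol] at h2
  have h3 : sin ((a - b) / 2) = 0 := by
    rcases mul_eq_zero.1 h2 with h | h
    · norm_num at h
    · exact abs_eq_zero.1 h
  have := (sin_eq_zero_iff_of_lt_of_lt (by linarith [ha.1, hb.2]) (by linarith [ha.2, hb.1])).1 h3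
  linarith

lemma exists_delta {K : ℝ} (hK : 1 < K) :
    ∃ δ > 0, ∀ a b : ℝ, |a - b| < δ → |a - b| ≤ K * dist (pol 1 a) (pol 1 b) := by
  have h := (continuous_sinc.tendsto 0).eventually
    (lt_mem_nhds (show K⁻¹ < sinc 0 by rw [sinc_zero]; exact inv_lt_one_of_one_lt₀ hK))
  obtain ⟨δ, hδ, H⟩ := Metric.eventually_nhds_iff.1 h
  refine ⟨δ, hδ, fun a b hab => ?_⟩
  have h1 : K⁻¹ < sinc ((a - b) / 2) := by
    apply H
    rw [Real.dist_eq, sub_zero, abs_div, abs_two]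
    linarith [abs_nonneg (a - b)]
  have hK0 : 0 < K := by linarith
  have h2 : sin ((a - b) / 2) = sinc ((a - b) / 2) * ((a - b) / 2) := by
    by_cases h0 : (a - b) / 2 = 0
    · simp [h0]
    · rw [sinc_of_ne_zero h0, div_mul_cancel₀ _ h0]
  rw [dist_pol, h2, abs_mul, abs_div (a - b), abs_two]
  have h3 : K⁻¹ ≤ |sinc ((a - b) / 2)| := h1.le.trans (le_abs_self _)
  have h4 : 1 ≤ K * |sinc ((a - b) / 2)| := by
    have := mul_le_mul_of_nonneg_left h3 hK0.le
    rwa [mul_inv_cancel₀ hK0.ne'] at this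
  nlinarith [abs_nonneg (a - b)]

lemma haus_image {S : Set ℝ} (hS : MeasurableSet S) (hsub : S ⊆ Set.Ioc (-π) π) :
    μH[1] (pol 1 '' S) = volume S := by
  have hup : μH[1] (pol 1 '' S) ≤ volume S := by
    have := pol_lip.hausdorffMeasure_image_le (d := 1) zero_le_one S
    simpa [hausdorffMeasure_real] using this
  have hfin : μH[1] (pol 1 '' S) ≠ ⊤ := by
    refine ne_top_of_le_ne_top ?_ (hup.trans (measure_mono hsub))
    simp
  refine le_antisymm hup ?_
  have key : ∀ K : NNReal, 1 < K → volume S ≤ K * μH[1] (pol 1 '' S) := by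
    intro K hK
    obtain ⟨δ, hδ, H⟩ := exists_delta (K := K) (by exact_mod_cast hK)
    have hS' : S = ⋃ n : ℤ, S ∩ Set.Ioc (n • (δ / 2)) ((n + 1) • (δ / 2)) := by
      rw [← Set.inter_iUnion, iUnion_Ioc_zsmul (by positivity), Set.inter_univ]
    have hdisj : Pairwise (Function.onFun Disjoint
        fun n : ℤ => S ∩ Set.Ioc (n • (δ / 2)) ((n + 1) • (δ / 2))) := by
      intro m n hmn
      have hd := Set.pairwise_disjoint_Ioc_add_zsmul (0 : ℝ) (δ / 2) hmn
      simp only [zero_add] at hd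
      exact hd.mono Set.inter_subset_right
        Set.inter_subset_right
    have hmeas : ∀ n : ℤ, MeasurableSet (S ∩ Set.Ioc (n • (δ / 2)) ((n + 1) • (δ / 2))) :=
      fun n => hS.inter measurableSet_Ioc
    have hinj : Set.InjOn (pol 1) S := pol_inj.mono hsub
    have himg : pol 1 '' S = ⋃ n : ℤ, pol 1 '' (S ∩ Set.Ioc (n • (δ / 2)) ((n + 1) • (δ / 2))) := by
      rw [← Set.image_iUnion, ← hS']
    rw [himg, measure_iUnion, ← ENNReal.tsum_mul_left]
    · conv_lhs => rw [hS']
      rw [measure_iUnion hdisj hmeas]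
      apply ENNReal.tsum_le_tsum
      intro n
      set T := S ∩ Set.Ioc (n • (δ / 2)) ((n + 1) • (δ / 2)) with hT
      have hTS : T ⊆ S := Set.inter_subset_left
      have hleft : ∀ x ∈ T, Function.invFunOn (pol 1) S (pol 1 x) = x := fun x hx =>
        hinj.leftInvOn_invFunOn (hTS hx)
      have hl : LipschitzOnWith K (Function.invFunOn (pol 1) S) (pol 1 '' T) := by
        apply LipschitzOnWith.of_dist_le_mul
        rintro _ ⟨a, ha, rfl⟩ _ ⟨b, hb, rfl⟩
        rw [hleft a ha, hleft b hb, Real.dist_eq]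
        apply H
        have h1 := ha.2
        have h2 := hb.2
        simp only [zsmul_eq_mul, Set.mem_Ioc, Int.cast_add, Int.cast_one] at h1 h2
        rw [abs_lt]
        constructor <;> linarith
      have := hl.hausdorffMeasure_image_le (d := 1) zero_le_one
      rw [← Set.image_comp, Set.image_congr (g := id) (by simpa using hleft), Set.image_id,
        hausdorffMeasure_real] at this
      simpa using this
    · intro m n hmn
      rw [Function.onFun, Set.disjoint_iff_inter_eq_empty, ← hinj.image_inter Set.inter_subset_left
        Set.inter_subset_left, Set.disjoint_iff_inter_eq_empty.1 (hdisj hmn), Set.image_empty]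
    · intro n
      exact (hmeas n).image_of_continuousOn_injOn pol_lip.continuous.continuousOn
        (hinj.mono Set.inter_subset_left)
  have ht : Filter.Tendsto (fun K : NNReal => (K : ENNReal) * μH[1] (pol 1 '' S))
      (nhdsWithin 1 (Set.Ioi 1)) (nhds (((1 : NNReal) : ENNReal) * μH[1] (pol 1 '' S))) := by
    apply ENNReal.Tendsto.mul_const _ (Or.inr hfin)
    exact (ENNReal.continuous_coe.tendsto 1).mono_left nhdsWithin_le_nhds
  have := ge_of_tendsto ht (b := volume S) (by
    filter_upwards [self_mem_nhdsWithin] with K hK using key K hK)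
  simpa using this

lemma pol_image : pol 1 '' (Set.Ioc (-π) π) = sphere (0 : E2) 1 := by
  ext y
  constructor
  · rintro ⟨t, -, rfl⟩
    simp [norm_pol]
  · intro hy
    have hy1 : ‖y‖ = 1 := by simpa using hy
    have hsq : y 0 ^ 2 + y 1 ^ 2 = 1 := by
      have := EuclideanSpace.norm_sq_eq y
      rw [hy1, Fin.sum_univ_two] at this
      simp only [norm_eq_abs, sq_abs] at this
      linarith
    have hz : ‖(⟨y 0, y 1⟩ : ℂ)‖ = 1 := by
      rw [Complex.norm_def, Complex.normSq_mk, show y 0 * y 0 + y 1 * y 1 = 1 by linarith, sqrt_one]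
    refine ⟨Complex.arg ⟨y 0, y 1⟩, ⟨Complex.neg_pi_lt_arg _, Complex.arg_le_pi _⟩, ?_⟩
    have hz0 : (⟨y 0, y 1⟩ : ℂ) ≠ 0 := by
      intro h; rw [h] at hz; simp at hz
    ext i
    fin_cases i
    · simp [pol_zero, Complex.cos_arg hz0, hz]
    · simp [pol_one, Complex.sin_arg, hz]

lemma haus_sphere : (μH[1] : Measure E2).restrict (sphere (0 : E2) 1) =
    (volume.restrict (Set.Ioc (-π) π)).map (pol 1) := by
  have hm : Measurable (pol 1) := pol_lip.continuous.measurable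
  ext A hA
  rw [Measure.restrict_apply hA, Measure.map_apply hm hA, Measure.restrict_apply (hm hA),
    ← haus_image ((hm hA).inter measurableSet_Ioc) Set.inter_subset_right, ← pol_image,
    Set.image_preimage_inter]

lemma sphere_integral {f : E2 → ℝ} (hf : Continuous f) :
    ∫ y in sphere (0 : E2) 1, f y ∂μH[1] = ∫ t in (-π)..π, f (pol 1 t) := by
  rw [haus_sphere, integral_map pol_lip.continuous.aemeasurable hf.aestronglyMeasurable,
    intervalIntegral.integral_of_le (by linarith [pi_pos])]

lemma dw_eq (i : Fin 2) (y : E2) : dw i y = -(y i) / (2 * (max 1 ‖y‖) ^ 2) := by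
  unfold dw
  split_ifs with h
  · rw [max_eq_left h]; norm_num
  · rw [max_eq_right (not_le.1 h).le]

lemma dw_cont (i : Fin 2) : Continuous (dw i) := by
  rw [funext (dw_eq i)]
  apply Continuous.div (by fun_prop) (by fun_prop)
  intro y
  have : 0 < max 1 ‖y‖ := lt_of_lt_of_le one_pos (le_max_left _ _)
  positivity

lemma dw_bdd (i : Fin 2) (y : E2) : |dw i y| ≤ 1 := by
  rw [dw_eq, abs_div, abs_neg, abs_of_nonneg (a := 2 * _) (by positivity)]
  have h1 : 1 ≤ max 1 ‖y‖ := le_max_left _ _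
  have h2 : |y i| ≤ max 1 ‖y‖ := (PiLp.norm_apply_le y i).trans (le_max_right _ _)
  rw [div_le_one (by positivity)]
  nlinarith

/-- Partial derivative. -/
noncomputable def pd (f : E2 → ℝ) (i : Fin 2) (z : E2) : ℝ :=
  fderiv ℝ f z (EuclideanSpace.single i 1)

lemma pd_smooth {f : E2 → ℝ} (hf : ContDiff ℝ (⊤ : ℕ∞) f) (i : Fin 2) :
    ContDiff ℝ (⊤ : ℕ∞) (pd f i) := by
  unfold pd
  exact (hf.fderiv_right (m := (⊤ : ℕ∞)) (by norm_cast)).clm_apply contDiff_const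

lemma vec_deriv {x y : ℝ → ℝ} {x' y' s : ℝ} (hx : HasDerivAt x x' s) (hy : HasDerivAt y y' s)
    {f : E2 → ℝ} (hf : ContDiff ℝ (⊤ : ℕ∞) f) :
    HasDerivAt (fun s => f !₂[x s, y s])
      (x' * pd f 0 !₂[x s, y s] + y' * pd f 1 !₂[x s, y s]) s := by
  have hv : HasDerivAt (fun s => (!₂[x s, y s] : E2)) (!₂[x', y'] : E2) s := by
    have h := (PiLp.hasFDerivAt_toLp (𝕜 := ℝ) 2 (E := fun _ : Fin 2 => ℝ) ![x s, y s]).comp_hasDerivAt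
      (f := fun s => ![x s, y s]) (f' := ![x', y']) s
    refine h ?_
    rw [hasDerivAt_pi]
    intro i
    fin_cases i
    · simpa using hx
    · simpa using hy
  have hd : DifferentiableAt ℝ f !₂[x s, y s] := (hf.differentiable (by simp)).differentiableAt
  convert! hd.hasFDerivAt.comp_hasDerivAt s hv using 1
  have : (!₂[x', y'] : E2) = x' • EuclideanSpace.single 0 1 + y' • EuclideanSpace.single 1 1 := by
    ext i
    fin_cases i <;> simp
  rw [this, map_add, map_smul, map_smul]
  rfl

lemma pol_dr {f : E2 → ℝ} (hf : ContDiff ℝ (⊤ : ℕ∞) f) (r t : ℝ) :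
    HasDerivAt (fun r => f (pol r t)) (cos t * pd f 0 (pol r t) + sin t * pd f 1 (pol r t)) r := by
  have h := vec_deriv (x := fun r => r * cos t) (y := fun r => r * sin t)
    ((hasDerivAt_id r).mul_const (cos t)) ((hasDerivAt_id r).mul_const (sin t)) hf
  simpa only [one_mul] using! h

lemma pol_dt {f : E2 → ℝ} (hf : ContDiff ℝ (⊤ : ℕ∞) f) (r t : ℝ) :
    HasDerivAt (fun t => f (pol r t))
      (-(r * sin t) * pd f 0 (pol r t) + (r * cos t) * pd f 1 (pol r t)) t := by
  have h := vec_deriv (x := fun t => r * cos t) (y := fun t => r * sin t)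
    ((hasDerivAt_cos t).const_mul r) ((hasDerivAt_sin t).const_mul r) hf
  simpa only [mul_neg] using! h

lemma pol_per (r : ℝ) : pol r π = pol r (-π) := by
  simp [pol]

lemma integral_polar (G : E2 → ℝ) :
    ∫ y, G y = ∫ p in Set.Ioi (0 : ℝ) ×ˢ Set.Ioo (-π) π, p.1 * G (pol p.1 p.2) := by
  have h1 : ∫ y, G y = ∫ p : ℝ × ℝ, G (!₂[p.1, p.2]) := by
    rw [← (PiLp.volume_preserving_toLp (Fin 2)).integral_comp
      (MeasurableEquiv.toLp 2 (Fin 2 → ℝ)).measurableEmbedding,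
      ← ((volume_preserving_finTwoArrow ℝ).symm _).integral_comp
      (MeasurableEquiv.measurableEmbedding _)]
    rfl
  rw [h1, ← integral_comp_polarCoord_symm]
  rfl

lemma integral_polar' {G : E2 → ℝ} (hG : Continuous G) {R : ℝ} (hR : 1 ≤ R)
    (hsupp : ∀ y, R ≤ ‖y‖ → G y = 0) :
    ∫ y, G y = (∫ r in (0 : ℝ)..1, ∫ t in (-π)..π, r * G (pol r t)) +
      ∫ r in (1 : ℝ)..R, ∫ t in (-π)..π, r * G (pol r t) := by
  have hpi : -π ≤ π := by linarith [pi_pos]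
  have hc : Continuous fun p : ℝ × ℝ => p.1 * G (pol p.1 p.2) :=
    continuous_fst.mul (hG.comp pol_cont)
  have hci : Continuous fun r : ℝ => ∫ t in (-π)..π, r * G (pol r t) :=
    intervalIntegral.continuous_parametric_intervalIntegral_of_continuous' hc _ _
  rw [intervalIntegral.integral_add_adjacent_intervals (hci.intervalIntegrable _ _)
    (hci.intervalIntegrable _ _), intervalIntegral.integral_of_le (by linarith)]
  simp_rw [intervalIntegral.integral_of_le hpi]
  rw [integral_polar]
  simp_rw [integral_Ioc_eq_integral_Ioo (x := -π)]
  rw [← setIntegral_prod (f := fun p : ℝ × ℝ => p.1 * G (pol p.1 p.2))]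
  · apply setIntegral_eq_of_subset_of_forall_sdiff_eq_zero
    · exact measurableSet_Ioi.prod measurableSet_Ioo
    · exact Set.prod_mono Set.Ioc_subset_Ioi_self le_rfl
    · rintro ⟨r, t⟩ ⟨⟨h1, h2⟩, h3⟩
      have h1' : 0 < r := h1
      have : R ≤ r := by
        by_contra hlt
        exact h3 ⟨⟨h1, (not_le.1 hlt).le⟩, h2⟩
      simp only
      rw [hsupp _ (by rw [norm_pol h1'.le]; exact this), mul_zero]
  · exact (hc.continuousOn.integrableOn_compact (isCompact_Icc.prod isCompact_Icc)).mono_set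
      (Set.prod_mono Set.Ioc_subset_Icc_self Set.Ioo_subset_Icc_self)

lemma main_id (i : Fin 2) {c c' : ℝ → ℝ} (hci : ∀ r t, pol r t i = r * c t)
    (hc : ∀ t, HasDerivAt c (c' t) t) (hc' : ∀ t, HasDerivAt c' (-c t) t)
    (hcper : c π = c (-π)) (hcper' : c' π = c' (-π))
    {φ : E2 → ℝ} (hφ : ContDiff ℝ (⊤ : ℕ∞) φ) (hs : HasCompactSupport φ) :
    ∫ y, dw i y * lap φ y = ∫ t in (-π)..π, c t * φ (pol 1 t) := by
  obtain ⟨R₀, hR₀⟩ := hs.isCompact.isBounded.subset_closedBall (0 : E2)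
  set R := max 1 (R₀ + 1) with hRdef
  have hR : 1 ≤ R := le_max_left _ _
  have hout : ∀ y : E2, R ≤ ‖y‖ → y ∉ tsupport φ := by
    intro y hy hmem
    have := hR₀ hmem
    rw [mem_closedBall_zero_iff] at this
    linarith [le_max_right 1 (R₀ + 1)]
  have hts : ∀ (f : E2 → ℝ) (j : Fin 2), tsupport (pd f j) ⊆ tsupport f := fun f j =>
    tsupport_fderiv_apply_subset ℝ _
  have h0 : ∀ y : E2, R ≤ ‖y‖ → φ y = 0 := fun y hy => image_eq_zero_of_notMem_tsupport (hout y hy)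
  have h1 : ∀ j, ∀ y : E2, R ≤ ‖y‖ → pd φ j y = 0 := fun j y hy =>
    image_eq_zero_of_notMem_tsupport (fun h => hout y hy (hts _ _ h))
  have h2 : ∀ j k, ∀ y : E2, R ≤ ‖y‖ → pd (pd φ j) k y = 0 := fun j k y hy =>
    image_eq_zero_of_notMem_tsupport (fun h => hout y hy (hts _ _ (hts _ _ h)))
  have hlap : ∀ y, lap φ y = pd (pd φ 0) 0 y + pd (pd φ 1) 1 y := by
    intro y
    unfold lap
    rw [Fin.sum_univ_two]
    rfl
  have s1 := pd_smooth hφ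
  have s2 := fun j => pd_smooth (s1 j)
  have cp0 : Continuous fun p : ℝ × ℝ => φ (pol p.1 p.2) := hφ.continuous.comp pol_cont
  have cp1 : ∀ j, Continuous fun p : ℝ × ℝ => pd φ j (pol p.1 p.2) :=
    fun j => (s1 j).continuous.comp pol_cont
  have cp2 : ∀ j k, Continuous fun p : ℝ × ℝ => pd (pd φ j) k (pol p.1 p.2) :=
    fun j k => (s2 j k).continuous.comp pol_cont
  have cp10 := cp1 0
  have cp11 := cp1 1
  have cp200 := cp2 0 0
  have cp201 := cp2 0 1
  have cp210 := cp2 1 0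
  have cp211 := cp2 1 1
  have hlc : Continuous (lap φ) := by
    rw [funext hlap]
    exact (s2 0 0).continuous.add (s2 1 1).continuous
  have hRn : ∀ t, R ≤ ‖pol R t‖ := fun t => by rw [norm_pol (by linarith)]
  set g : ℝ → ℝ := fun r => if r ≤ 1 then -r / 2 else -1 / (2 * r) with hg
  have hdw : ∀ r, 0 ≤ r → ∀ t, dw i (pol r t) = g r * c t := by
    intro r hr t
    simp only [dw, hg, norm_pol hr, hci]
    split_ifs with h
    · ring
    · have : r ≠ 0 := by intro h'; apply h; rw [h']; norm_num
      field_simp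
  rw [integral_polar' (G := fun y => dw i y * lap φ y) ((dw_cont i).mul hlc) hR
    (fun y hy => by rw [hlap, h2 _ _ y hy, h2 _ _ y hy]; ring)]
  rw [← core (R := R) hR (F := fun r t => φ (pol r t))
    (Fr := fun r t => cos t * pd φ 0 (pol r t) + sin t * pd φ 1 (pol r t))
    (Ft := fun r t => -(r * sin t) * pd φ 0 (pol r t) + (r * cos t) * pd φ 1 (pol r t))
    (Frr := fun r t =>
      cos t * (cos t * pd (pd φ 0) 0 (pol r t) + sin t * pd (pd φ 0) 1 (pol r t)) +
      sin t * (cos t * pd (pd φ 1) 0 (pol r t) + sin t * pd (pd φ 1) 1 (pol r t)))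
    (Ftt := fun r t =>
      (-(r * cos t) * pd φ 0 (pol r t) + -(r * sin t) * (-(r * sin t) * pd (pd φ 0) 0 (pol r t) +
        (r * cos t) * pd (pd φ 0) 1 (pol r t))) +
      (-(r * sin t) * pd φ 1 (pol r t) + (r * cos t) * (-(r * sin t) * pd (pd φ 1) 0 (pol r t) +
        (r * cos t) * pd (pd φ 1) 1 (pol r t))))
    (L := fun r t => lap φ (pol r t)) (c := c) (c' := c') (g := g)]
  · congr 1
    · apply intervalIntegral.integral_congr
      intro r hr
      rw [Set.uIcc_of_le zero_le_one] at hr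
      simp only [hdw r hr.1]
    · apply intervalIntegral.integral_congr
      intro r hr
      rw [Set.uIcc_of_le hR] at hr
      simp only [hdw r (by linarith [hr.1])]
  · simpa only [Function.uncurry_def] using cp0
  · simp only [Function.uncurry_def]
    fun_prop
  · simp only [Function.uncurry_def]
    fun_prop
  · simp only [Function.uncurry_def]
    fun_prop
  · exact hc
  · exact hc'
  · exact hcper
  · exact hcper'
  · intro r
    simp only [pol_per]
  · intro r
    simp [pol_per]
  · intro r t
    exact pol_dr hφ r t
  · intro r t
    exact ((pol_dr (s1 0) r t).const_mul (cos t)).add ((pol_dr (s1 1) r t).const_mul (sin t))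
  · intro r t
    exact pol_dt hφ r t
  · intro r t
    have a1 : HasDerivAt (fun t => -(r * sin t)) (-(r * cos t)) t :=
      ((hasDerivAt_sin t).const_mul r).neg
    have a2 : HasDerivAt (fun t => r * cos t) (-(r * sin t)) t := by
      simpa only [mul_neg] using (hasDerivAt_cos t).const_mul r
    exact (a1.mul (pol_dt (s1 0) r t)).add (a2.mul (pol_dt (s1 1) r t))
  · intro r t
    simp only [hlap]
    linear_combination -(r ^ 2 * (pd (pd φ 0) 0 (pol r t) + pd (pd φ 1) 1 (pol r t))) *
      sin_sq_add_cos_sq t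
  · intro t
    exact h0 _ (hRn t)
  · intro t
    simp only [h1 _ _ (hRn t)]
    ring
  · intro r hr
    simp only [hg, if_pos hr.2]
  · intro r hr
    simp only [hg]
    split_ifs with h
    · have : r = 1 := le_antisymm h hr.1
      rw [this]; norm_num
    · rfl

lemma final (i : Fin 2) {c c' : ℝ → ℝ} (hci : ∀ r t, pol r t i = r * c t)
    (hc : ∀ t, HasDerivAt c (c' t) t) (hc' : ∀ t, HasDerivAt c' (-c t) t)
    (hcper : c π = c (-π)) (hcper' : c' π = c' (-π))
    {φ : E2 → ℝ} (hφ : ContDiff ℝ (⊤ : ℕ∞) φ) (hs : HasCompactSupport φ) :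
    -(∫ y, dw i y * lap φ y) = 2 * ∫ y in sphere (0 : E2) 1, dw i y * φ y ∂μH[1] := by
  rw [main_id i hci hc hc' hcper hcper' hφ hs, sphere_integral (f := fun y => dw i y * φ y) ((dw_cont i).mul hφ.continuous),
    ← intervalIntegral.integral_const_mul, ← intervalIntegral.integral_neg]
  congr 1
  ext t
  simp only [dw, norm_pol zero_le_one, le_refl, if_true, hci]
  ring

/-- the functions `∂w/∂y_i` are bounded, continuous, and are
distributional solutions of the linearized equation `−Δv = 2 v δ_{|y|=1}`. -/
theorem stmt13 (i : Fin 2) :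
    (∃ C : ℝ, ∀ y, |dw i y| ≤ C) ∧ Continuous (dw i) ∧
    (∀ φ : E2 → ℝ, ContDiff ℝ (⊤ : ℕ∞) φ → HasCompactSupport φ →
      -(∫ y, dw i y * lap φ y) = 2 * ∫ y in sphere (0 : E2) 1, dw i y * φ y ∂μH[1]) := by
  refine ⟨⟨1, dw_bdd i⟩, dw_cont i, fun φ hφ hs => ?_⟩
  fin_cases i
  · exact final 0 (c := cos) (c' := fun t => -sin t) pol_zero hasDerivAt_cos
      (fun t => (hasDerivAt_sin t).neg) (by simp) (by simp) hφ hs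
  · exact final 1 (c := sin) (c' := cos) pol_one hasDerivAt_sin hasDerivAt_cos
      (by simp) (by simp) hφ hs
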